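/- Let w ∈ 𝒱 be a generalized snake word of length n. Then there exists a bijection between the collection 𝒢(w) of nonempty subsets of {0, …, n} inducing connected subgraphs of G(w) and the collection of circuits of the vertex set V(Q_w) of the order polytope O(Q_w); in particular, the number of circuits of V(Q_w) equals |𝒢(w)|. -/

import Mathlib

/-- The two-letter alphabet `{L, R}` for generalized snake words. -/
inductive Letter : Type
  | L
  | R
  deriving DecidableEq

/-- The element of the generalized snake poset covered by `2m+2` (besides the relations
coming from `2m+3`): it is `2m-1` when the word turns at the `m`-th letter
(i.e. `m = 1` and `w 1 = L`, or `m ≥ 2` and `w (m-1) ≠ w m`), and `2m` otherwise. -/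
def snakeSide (w : ℕ → Letter) (m : ℕ) : ℕ :=
  if (m = 1 ∧ w 1 = Letter.L) ∨ (2 ≤ m ∧ w (m - 1) ≠ w m) then 2 * m - 1 else 2 * m

/-- The covering relation of the generalized snake poset `P(w)` for the word
`ε w₁ ⋯ w_n` (the letter `w i` for `1 ≤ i ≤ n` is the `i`-th letter).
`SnakeCov n w a b` means `a ≺ b`, i.e. `a` is covered by `b`. -/
inductive SnakeCov (n : ℕ) (w : ℕ → Letter) : ℕ → ℕ → Prop
  | cov10 : SnakeCov n w 1 0
  | cov20 : SnakeCov n w 2 0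
  | cov31 : SnakeCov n w 3 1
  | cov32 : SnakeCov n w 3 2
  | covOdd (m : ℕ) (h1 : 1 ≤ m) (h2 : m ≤ n) : SnakeCov n w (2 * m + 3) (2 * m + 1)
  | covBot (m : ℕ) (h1 : 1 ≤ m) (h2 : m ≤ n) : SnakeCov n w (2 * m + 3) (2 * m + 2)
  | covSide (m : ℕ) (h1 : 1 ≤ m) (h2 : m ≤ n) : SnakeCov n w (2 * m + 2) (snakeSide w m)

/-- The order relation of the generalized snake poset `P(w)` on `{0, …, 2n+3}`:
the reflexive-transitive closure of the covering relation. -/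
def SnakeLE (n : ℕ) (w : ℕ → Letter) : ℕ → ℕ → Prop :=
  Relation.ReflTransGen (SnakeCov n w)

theorem snakeCov_lt {n : ℕ} {w : ℕ → Letter} {a b : ℕ} (h : SnakeCov n w a b) : b < a := by
  cases h
  case covSide m h1 h2 => unfold snakeSide; split <;> omega
  all_goals omega

theorem snakeLE_le {n : ℕ} {w : ℕ → Letter} {a b : ℕ} (h : SnakeLE n w a b) : b ≤ a := by
  induction h with
  | refl => exact le_refl a
  | tail _ hc ih => exact le_trans (le_of_lt (snakeCov_lt hc)) ih

/-- The generalized snake poset `P(ε w₁ ⋯ w_n)` as a type: its elements are `0, 1, …, 2n+3`. -/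
def SnakePoset (n : ℕ) (w : ℕ → Letter) : Type := Fin (2 * n + 4)

instance (n : ℕ) (w : ℕ → Letter) : PartialOrder (SnakePoset n w) where
  le a b := SnakeLE n w a.1 b.1
  le_refl _ := Relation.ReflTransGen.refl
  le_trans _ _ _ h1 h2 := Relation.ReflTransGen.trans h1 h2
  le_antisymm a b h1 h2 := Fin.ext (Nat.le_antisymm (snakeLE_le h2) (snakeLE_le h1))

/-- The number of linear extensions of `P(ε w₁ ⋯ w_n)`: order-preserving bijections
onto the chain `Fin (2n+4)`.  By Stanley's theorem this is the normalized volume of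
the order polytope `O(P(w))`. -/
noncomputable def linExtCount (n : ℕ) (w : ℕ → Letter) : ℕ :=
  Nat.card {f : SnakePoset n w ≃ Fin (2 * n + 4) //
    ∀ a b : SnakePoset n w, a ≤ b → f a ≤ f b}

/-- The collection of filters (upper order ideals) of `P(ε w₁ ⋯ w_n)`,
as subsets of `{0, …, 2n+3} ⊆ ℕ`. -/
def SnakeFilters (n : ℕ) (w : ℕ → Letter) : Set (Set ℕ) :=
  {A | (∀ a ∈ A, a < 2 * n + 4) ∧ ∀ a ∈ A, ∀ b, SnakeLE n w a b → b ∈ A}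

/-- The filter of `P(ε w₁ ⋯ w_n)` generated by a set `S`: its upward closure. -/
def snakeUp (n : ℕ) (w : ℕ → Letter) (S : Set ℕ) : Set ℕ :=
  {b | ∃ a ∈ S, SnakeLE n w a b}

/-- The alternating word `L R L R ⋯` (letter `i` is `L` for odd `i`),
defining the snake poset `S_n = P(ε L R L R ⋯)`. -/
def altWord : ℕ → Letter := fun i => if i % 2 = 1 then Letter.L else Letter.R

/-- Flipping a letter `L ↔ R`. -/
def Letter.flip : Letter → Letter
  | Letter.L => Letter.R
  | Letter.R => Letter.L

/-- The swap operation `f_i`: flip all letters with index `≥ i`. -/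
def swapFrom (w : ℕ → Letter) (i : ℕ) : ℕ → Letter :=
  fun j => if i ≤ j then (w j).flip else w j

/-- Membership in `𝒱`: the letter sequence `w₁ ⋯ w_n` contains neither `LRL` nor
`RLR` as a consecutive substring. -/
def InV (n : ℕ) (w : ℕ → Letter) : Prop :=
  ∀ i, 1 ≤ i → i + 2 ≤ n → w i = w (i + 1) ∨ w (i + 1) = w (i + 2)

/-- The order on `{0, …, 2n+5}` making `P̂(w)`: the poset `P(w)` (elements `0, …, 2n+3`)
with a new maximum `2n+4` and a new minimum `2n+5` adjoined. -/
def SnakeHatLE (n : ℕ) (w : ℕ → Letter) (a b : ℕ) : Prop :=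
  a = 2 * n + 5 ∨ b = 2 * n + 4 ∨ (a < 2 * n + 4 ∧ b < 2 * n + 4 ∧ SnakeLE n w a b)

/-- The lattice `P̂(w)`: `P(w)` with a new minimum `0̂ = 2n+5` and maximum `1̂ = 2n+4`. -/
def SnakeHat (n : ℕ) (w : ℕ → Letter) : Type := Fin (2 * n + 6)

instance (n : ℕ) (w : ℕ → Letter) : PartialOrder (SnakeHat n w) where
  le a b := SnakeHatLE n w a.1 b.1
  le_refl a := by
    by_cases h5 : a.1 = 2 * n + 5
    · exact Or.inl h5
    · by_cases h4 : a.1 = 2 * n + 4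
      · exact Or.inr (Or.inl h4)
      · have := a.2
        exact Or.inr (Or.inr ⟨by omega, by omega, Relation.ReflTransGen.refl⟩)
  le_trans a b c hab hbc := by
    rcases hab with h | h | ⟨ha, hb, hab⟩
    · exact Or.inl h
    · rcases hbc with h' | h' | ⟨hb', hc, hbc⟩
      · exact absurd h' (by omega)
      · exact Or.inr (Or.inl h')
      · exact absurd h (by omega)
    · rcases hbc with h' | h' | ⟨hb', hc, hbc⟩
      · exact absurd h' (by omega)
      · exact Or.inr (Or.inl h')
      · exact Or.inr (Or.inr ⟨ha, hc, Relation.ReflTransGen.trans hab hbc⟩)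
  le_antisymm a b h1 h2 := by
    apply Fin.ext
    rcases h1 with h | h | ⟨ha, hb, hab⟩ <;>
      rcases h2 with h' | h' | ⟨ha', hb', hba⟩ <;>
        first
          | omega
          | exact Nat.le_antisymm (snakeLE_le hba) (snakeLE_le hab)

/-- An element `x` of a (finite) lattice is meet-irreducible if it is not the maximum
element and whenever `x` is the meet (greatest lower bound) of `y` and `z`,
one has `x = y` or `x = z`. -/
def MeetIrred {α : Type*} [PartialOrder α] (x : α) : Prop :=
  ¬IsTop x ∧ ∀ y z : α, IsGLB {y, z} x → x = y ∨ x = z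

/-- The poset `Q_w` of meet-irreducible elements of `P̂(w)`, as an induced subposet. -/
abbrev SnakeQ (n : ℕ) (w : ℕ → Letter) : Type :=
  {x : SnakeHat n w // MeetIrred x}

/-- The vertex set of the order polytope `O(α)` of a finite poset `α`: the 0/1 indicator
vectors of the filters of `α`. -/
def OPVertexSet (α : Type*) [PartialOrder α] : Set (α → ℝ) :=
  {v | ∃ A : Set α, (∀ a ∈ A, ∀ b, a ≤ b → b ∈ A) ∧ v = A.indicator fun _ => (1 : ℝ)}

/-- A circuit of a point configuration: an affinely dependent set all of whose proper
subsets are affinely independent. -/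
def IsAffCircuit {α : Type*} (Z : Set (α → ℝ)) : Prop :=
  ¬AffineIndependent ℝ (Subtype.val : Z → (α → ℝ)) ∧
    ∀ Y : Set (α → ℝ), Y ⊂ Z → AffineIndependent ℝ (Subtype.val : Y → (α → ℝ))

/-- The adjacency relation of the graph `G(w)` on vertices `{0, 1, …, n}`:
consecutive indices are adjacent, and `i` and `i+2` are adjacent when
`w (i+1) ≠ w (i+2)` (a turn of the word). -/
def snakeAdj (n : ℕ) (w : ℕ → Letter) (i j : ℕ) : Prop :=
  (j = i + 1 ∧ j ≤ n) ∨ (i = j + 1 ∧ i ≤ n) ∨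
    (j = i + 2 ∧ j ≤ n ∧ w (i + 1) ≠ w (i + 2)) ∨
    (i = j + 2 ∧ i ≤ n ∧ w (j + 1) ≠ w (j + 2))

/-- `𝒢(w)`: the collection of nonempty subsets of `{0, …, n}` inducing connected
subgraphs of `G(w)`. -/
def GSets (n : ℕ) (w : ℕ → Letter) : Set (Set ℕ) :=
  {S | S.Nonempty ∧ (∀ i ∈ S, i ≤ n) ∧
    ∀ a ∈ S, ∀ b ∈ S,
      Relation.ReflTransGen (fun x y => x ∈ S ∧ y ∈ S ∧ snakeAdj n w x y) a b}

/-!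
The circuits of a point configuration are the minimal supports of its affine relations. By
Birkhoff duality the vertices of `O(Q_w)` correspond to the elements of `P̂(w)`, and the space of
affine relations among them has as basis the relations `top - left - right + bottom` of the
squares `0, …, n` of `P(w)`. In these coordinates a relation is a finitely supported sequence `c`,
and its values at the elements of `P̂(w)` are, up to sign, `c 0`, the differences
`c k - c (k + 1)`, and, at every turn `k`, also `c (k + 1)` and `c k - c (k + 1) + c (k + 2)`. All
the differences occur because no two turns of a word in `𝒱` are consecutive. The minimal supports
are therefore attained by the sequences with `c k = c (k + 1)` along runs and a sign change across
each gap bridged by a turn, that is, by one sequence up to scaling for each set inducing a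
connected subgraph of `G(w)`.
-/

section AffineCircuits

variable {k V ι : Type*} [Ring k] [AddCommGroup V] [Module k V]

theorem affineIndependent_iff_linearIndependent_prodMk_one {p : ι → V} :
    AffineIndependent k p ↔ LinearIndependent k fun i => (p i, (1 : k)) := by
  simp only [affineIndependent_iff, linearIndependent_iff', Prod.ext_iff, Prod.fst_sum,
    Prod.snd_sum, Prod.smul_fst, Prod.smul_snd, Prod.fst_zero, Prod.snd_zero, smul_eq_mul, mul_one]
  exact forall₂_congr fun s f => by tauto

variable (k) in
/-- The affine relations among the points `p i`: the coefficient vectors `f` with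
`∑ f i = 0` and `∑ f i • p i = 0`, encoded as the linear relations among the lifted
points `(p i, 1)`. -/
noncomputable def affineRelations (p : ι → V) : Submodule k (ι →₀ k) :=
  LinearMap.ker (Finsupp.linearCombination k fun i => (p i, (1 : k)))

theorem affineIndependent_image_iff {p : ι → V} (hp : Function.Injective p) {X : Set ι} :
    AffineIndependent k (Subtype.val : p '' X → V) ↔
      ∀ f ∈ affineRelations k p, ↑f.support ⊆ X → f = 0 := by
  rw [← affineIndependent_equiv (Equiv.Set.image p X hp),
    affineIndependent_iff_linearIndependent_prodMk_one]
  refine (linearIndepOn_iff (v := fun i => (p i, (1 : k)))).trans ?_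
  exact forall_congr' fun f => by
    rw [Finsupp.mem_supported, affineRelations, LinearMap.mem_ker]; tauto

/-- A system of representatives, up to scaling, of the elementary vectors of `K`, i.e. of its
nonzero vectors of inclusion-minimal support. -/
structure IsElementarySystem {σ : Type*} (K : Submodule k (ι →₀ k)) (e : σ → ι →₀ k) : Prop where
  mem : ∀ s, e s ∈ K
  ne_zero : ∀ s, e s ≠ 0
  exists_eq_smul : ∀ s, ∀ f ∈ K, f.support ⊆ (e s).support → ∃ t : k, f = t • e s
  exists_support_subset : ∀ f ∈ K, f ≠ 0 → ∃ s, (e s).support ⊆ f.support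
  support_injective : Function.Injective fun s => (e s).support

variable {α σ : Type*} {p : ι → α → ℝ} {e : σ → ι →₀ ℝ}

theorem IsElementarySystem.isAffCircuit_image (he : IsElementarySystem (affineRelations ℝ p) e)
    (hp : Function.Injective p) (s : σ) : IsAffCircuit (p '' (e s).support) := by
  refine ⟨fun h => he.ne_zero s ?_, fun Y hY => ?_⟩
  · exact (affineIndependent_image_iff hp).1 h _ (he.mem s) subset_rfl
  · obtain ⟨X, hX, rfl⟩ := Set.subset_image_iff.1 hY.subset
    refine (affineIndependent_image_iff hp).2 fun f hf hfX => ?_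
    obtain ⟨t, rfl⟩ := he.exists_eq_smul s f hf (Finset.coe_subset.1 (hfX.trans hX))
    by_contra hne
    have ht : t ≠ 0 := left_ne_zero_of_smul hne
    rw [Finsupp.support_smul_eq ht] at hfX
    exact hY.not_subset (Set.image_mono hfX)

theorem IsElementarySystem.exists_image_eq (he : IsElementarySystem (affineRelations ℝ p) e)
    (hp : Function.Injective p) {Z : Set (α → ℝ)} (hZ : Z ⊆ Set.range p) (hc : IsAffCircuit Z) :
    ∃ s, p '' (e s).support = Z := by
  obtain ⟨X, rfl⟩ := Set.subset_range_iff_exists_image_eq.1 hZ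
  have hdep := hc.1
  simp only [affineIndependent_image_iff hp, not_forall] at hdep
  obtain ⟨f, hf, hfX, hf0⟩ := hdep
  obtain ⟨s, hs⟩ := he.exists_support_subset f hf hf0
  have hsub : p '' (e s).support ⊆ p '' X :=
    Set.image_mono ((Finset.coe_subset.2 hs).trans hfX)
  refine ⟨s, hsub.eq_of_not_ssubset fun hss => ?_⟩
  exact (he.isAffCircuit_image hp s).1 (hc.2 _ hss)

theorem IsElementarySystem.exists_bijective (he : IsElementarySystem (affineRelations ℝ p) e)
    (hp : Function.Injective p) :
    ∃ Γ : σ → {Z : Set (α → ℝ) // Z ⊆ Set.range p ∧ IsAffCircuit Z}, Function.Bijective Γ := by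
  refine ⟨fun s => ⟨p '' (e s).support, Set.image_subset_range _ _, he.isAffCircuit_image hp s⟩,
    fun s s' h => he.support_injective ?_, fun ⟨Z, hZ, hc⟩ => ?_⟩
  · exact Finset.coe_injective (hp.image_injective (congrArg Subtype.val h))
  · obtain ⟨s, hs⟩ := he.exists_image_eq hp hZ hc
    exact ⟨s, Subtype.ext hs⟩

end AffineCircuits

section MeetIrreducibles

variable {α : Type*} [PartialOrder α]

theorem meetIrred_of_unique_cover {x u : α} (hu : ∀ y, x ≤ y → y = x ∨ u ≤ y) (hux : ¬u ≤ x) :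
    MeetIrred x := by
  refine ⟨fun htop => hux (htop u), fun y z hglb => ?_⟩
  by_contra! hne
  refine hux (hglb.2 ?_)
  rintro a (rfl | rfl)
  · exact (hu _ (hglb.1 (by simp))).resolve_left hne.1.symm
  · exact (hu _ (hglb.1 (by simp))).resolve_left hne.2.symm

theorem le_of_forall_meetIrred_le [WellFoundedGT α] {x y : α}
    (h : ∀ q, MeetIrred q → x ≤ q → y ≤ q) : y ≤ x := by
  induction x using WellFoundedGT.induction with
  | ind x ih =>
    by_cases hx : MeetIrred x
    · exact h x hx le_rfl
    by_cases htop : IsTop x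
    · exact htop y
    simp only [MeetIrred, htop, not_false_eq_true, true_and, not_forall, not_or] at hx
    obtain ⟨u, v, hglb, hu, hv⟩ := hx
    have hxu : x ≤ u := hglb.1 (by simp)
    have hxv : x ≤ v := hglb.1 (by simp)
    refine hglb.2 ?_
    rintro _ (rfl | rfl)
    · exact ih _ (hxu.lt_of_ne hu) fun q hq huq => h q hq (hxu.trans huq)
    · exact ih _ (hxv.lt_of_ne hv) fun q hq hvq => h q hq (hxv.trans hvq)

/-- The vertex of the order polytope of the meet-irreducibles that corresponds to `x` under
Birkhoff duality: the indicator vector of the filter of meet-irreducibles above `x`. -/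
noncomputable def principalVertex (x : α) : {q : α // MeetIrred q} → ℝ :=
  {q | x ≤ q.1}.indicator fun _ => 1

open Classical in
theorem principalVertex_apply (x : α) (q : {q : α // MeetIrred q}) :
    principalVertex x q = if x ≤ q then 1 else 0 :=
  Set.indicator_apply _ _ _

theorem principalVertex_injective [WellFoundedGT α] :
    Function.Injective (principalVertex (α := α)) := by
  suffices key : ∀ x y : α, principalVertex x = principalVertex y → y ≤ x from
    fun x y h => (key y x h.symm).antisymm (key x y h)
  refine fun x y h => le_of_forall_meetIrred_le fun q hq hxq => ?_
  by_contra hyq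
  simpa [principalVertex_apply, hxq, hyq] using congrFun h ⟨q, hq⟩

theorem exists_forall_le_iff_mem_of_isUpperSet [Finite α] {t : α} (ht : IsTop t)
    (hunion : ∀ x y : α, ∃ z, ∀ q, MeetIrred q → (z ≤ q ↔ x ≤ q ∨ y ≤ q))
    {A : Set {q : α // MeetIrred q}} (hA : IsUpperSet A) :
    ∃ x : α, ∀ q : {q : α // MeetIrred q}, x ≤ q ↔ q ∈ A := by
  suffices key : ∃ x : α, ∀ q : {q : α // MeetIrred q}, x ≤ q ↔ ∃ a ∈ A, a ≤ q by
    obtain ⟨x, hx⟩ := key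
    exact ⟨x, fun q => (hx q).trans ⟨fun ⟨a, ha, haq⟩ => hA haq ha, fun hq => ⟨q, hq, le_rfl⟩⟩⟩
  clear hA
  induction A, Set.toFinite A using Set.Finite.induction_on with
  | empty =>
    exact ⟨t, fun q => ⟨fun htq => absurd (fun y => (ht y).trans htq) q.2.1, by simp⟩⟩
  | @insert a A _ _ ih =>
    obtain ⟨x, hx⟩ := ih
    obtain ⟨z, hz⟩ := hunion a x
    exact ⟨z, fun q => by rw [hz q q.2, hx, Set.exists_mem_insert]; rfl⟩

theorem range_principalVertex [Finite α] {t : α} (ht : IsTop t)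
    (hunion : ∀ x y : α, ∃ z, ∀ q, MeetIrred q → (z ≤ q ↔ x ≤ q ∨ y ≤ q)) :
    Set.range (principalVertex (α := α)) = OPVertexSet {q : α // MeetIrred q} := by
  ext v
  constructor
  · rintro ⟨x, rfl⟩
    exact ⟨{q | x ≤ q.1}, fun a ha b hab => le_trans ha hab, rfl⟩
  · rintro ⟨A, hA, rfl⟩
    obtain ⟨x, hx⟩ := exists_forall_le_iff_mem_of_isUpperSet ht hunion
      fun a b hab ha => hA a ha b hab
    exact ⟨x, congrArg (Set.indicator · _) (Set.ext hx)⟩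

open Classical in
theorem sum_eq_zero_of_mem_affineRelations_principalVertex {f : α →₀ ℝ}
    (hf : f ∈ affineRelations ℝ principalVertex) {q : α} (hq : MeetIrred q ∨ IsTop q) :
    (f.sum fun x a => if x ≤ q then a else 0) = 0 := by
  rw [affineRelations, LinearMap.mem_ker, Finsupp.linearCombination_apply, Prod.ext_iff] at hf
  simp only [Finsupp.sum, Prod.fst_sum, Prod.snd_sum, Prod.smul_mk, smul_eq_mul, mul_one,
    Prod.fst_zero, Prod.snd_zero] at hf
  rcases hq with hq | hq
  · simpa [principalVertex_apply, Finsupp.sum] using congrFun hf.1 ⟨q, hq⟩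
  · simpa only [Finsupp.sum, hq _, if_true] using hf.2

theorem eq_zero_of_mem_affineRelations_principalVertex [WellFoundedLT α] {f : α →₀ ℝ}
    (hf : f ∈ affineRelations ℝ principalVertex)
    (hf0 : ∀ x, ¬MeetIrred x → ¬IsTop x → f x = 0) : f = 0 := by
  classical
  ext x
  induction x using WellFoundedLT.induction with
  | ind x ih =>
    by_cases hx : MeetIrred x ∨ IsTop x
    · have hsum := sum_eq_zero_of_mem_affineRelations_principalVertex hf hx
      rw [Finsupp.sum, Finset.sum_eq_single x, if_pos le_rfl] at hsum
      · exact hsum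
      · intro y _ hyx
        exact ite_eq_right_iff.2 fun hle => ih y (hle.lt_of_ne hyx)
      · simp
    · rw [not_or] at hx
      exact hf0 x hx.1 hx.2

end MeetIrreducibles

section LinkedSets

/-- The finite sets inducing connected subgraphs of the graph on `ℕ` with edges `{j, j + 1}` for
all `j` and `{j, j + 2}` for the turns `j`: every gap between two members is a single index
bridged by a turn. -/
structure IsLinked (T : ℕ → Prop) (S : Finset ℕ) : Prop where
  nonempty : S.Nonempty
  exists_turn : ∀ a ∈ S, ∀ b ∈ S, ∀ k, a < k → k < b → k ∉ S →
    ∃ j, k = j + 1 ∧ j ∈ S ∧ j + 2 ∈ S ∧ T j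

variable {T : ℕ → Prop} {S : Finset ℕ} {c d : ℕ →₀ ℝ} {j k : ℕ}

theorem IsLinked.induction {P : ℕ → Prop} (hS : IsLinked T S) (min : P (S.min' hS.nonempty))
    (succ : ∀ j ∈ S, j + 1 ∈ S → P j → P (j + 1))
    (skip : ∀ j ∈ S, j + 1 ∉ S → j + 2 ∈ S → T j → P j → P (j + 2)) : ∀ k ∈ S, P k := by
  intro k
  induction k using Nat.strong_induction_on with
  | _ k ih =>
    intro hk
    rcases (S.min'_le k hk).eq_or_lt with heq | hlt
    · rwa [← heq]
    obtain ⟨i, rfl⟩ := Nat.exists_eq_succ_of_ne_zero (Nat.ne_zero_of_lt hlt)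
    by_cases hi : i ∈ S
    · exact succ i hi hk (ih i (Nat.lt_succ_self i) hi)
    have hmin := S.min'_mem hS.nonempty
    have hne : S.min' hS.nonempty ≠ i := fun h => hi (h ▸ hmin)
    obtain ⟨j, rfl, hj, hj2, hT⟩ := hS.exists_turn _ hmin _ hk i (by omega) (by omega) hi
    exact skip j hj hi hj2 hT (ih j (by omega) hj)

theorem IsLinked.singleton (T : ℕ → Prop) (j : ℕ) : IsLinked T {j} where
  nonempty := Finset.singleton_nonempty j
  exists_turn a ha b hb k hak hkb _ := by
    rw [Finset.mem_singleton] at ha hb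
    omega

theorem IsLinked.insert {r : ℕ} (hS : IsLinked T S) (hr : r ∈ S) (hmin : ∀ k ∈ S, r ≤ k)
    (hjr : r = j + 1 ∨ r = j + 2 ∧ T j) : IsLinked T (insert j S) where
  nonempty := Finset.insert_nonempty j S
  exists_turn a ha b hb k hak hkb hk := by
    rw [Finset.mem_insert, not_or] at hk
    have hja : j ≤ a := by grind
    have hbS : b ∈ S := Finset.mem_of_mem_insert_of_ne hb (by omega)
    by_cases hkr : k < r
    · obtain ⟨rfl, hT⟩ : r = j + 2 ∧ T j := hjr.resolve_left (by omega)
      exact ⟨j, by omega, by simp, by simp [hr], hT⟩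
    · have hrk : r < k := (not_lt.1 hkr).lt_of_ne fun h => hk.2 (h ▸ hr)
      obtain ⟨i, hi, hiS, hi2, hT⟩ := hS.exists_turn r hr b hbS k hrk hkb hk.2
      exact ⟨i, hi, by simp [hiS], by simp [hi2], hT⟩

/-- The signed indicator vector of `S`, in which the sign changes at every gap. -/
noncomputable def signVector (S : Finset ℕ) : ℕ →₀ ℝ :=
  Finsupp.onFinset S (fun j => if j ∈ S then (-1) ^ ((Finset.range j).filter (· ∉ S)).card else 0)
    fun j hj => by by_contra h; exact hj (if_neg h)

theorem signVector_apply (S : Finset ℕ) (j : ℕ) :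
    signVector S j = if j ∈ S then (-1) ^ ((Finset.range j).filter (· ∉ S)).card else 0 :=
  rfl

theorem signVector_eq_zero_iff : signVector S j = 0 ↔ j ∉ S := by
  rw [signVector_apply]
  split <;> simp_all

theorem support_signVector (S : Finset ℕ) : (signVector S).support = S := by
  ext j
  rw [Finsupp.mem_support_iff, Ne, signVector_eq_zero_iff, not_not]

theorem signVector_succ (hj : j ∈ S) (hj1 : j + 1 ∈ S) : signVector S (j + 1) = signVector S j := by
  simp [signVector_apply, hj, hj1, Finset.range_add_one, Finset.filter_insert]

theorem signVector_skip (hj : j ∈ S) (hj1 : j + 1 ∉ S) (hj2 : j + 2 ∈ S) :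
    signVector S (j + 2) = -signVector S j := by
  simp [signVector_apply, hj, hj1, hj2, Finset.range_add_one, Finset.filter_insert, pow_succ]

theorem signVector_eq_succ (h : j ∈ S ↔ j + 1 ∈ S) : signVector S j = signVector S (j + 1) := by
  by_cases hj : j ∈ S
  · exact (signVector_succ hj (h.1 hj)).symm
  · rw [signVector_eq_zero_iff.2 hj, signVector_eq_zero_iff.2 (h.not.1 hj)]

theorem signVector_sub_add_eq_zero (h : j ∈ S ↔ (j + 1 ∈ S ↔ j + 2 ∉ S)) :
    signVector S j - signVector S (j + 1) + signVector S (j + 2) = 0 := by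
  by_cases hj1 : j + 1 ∈ S
  · by_cases hj : j ∈ S
    · rw [signVector_succ hj hj1, signVector_eq_zero_iff.2 ((h.1 hj).1 hj1)]
      ring
    · have hj2 : j + 1 + 1 ∈ S := by tauto
      rw [signVector_eq_zero_iff.2 hj, ← signVector_succ hj1 hj2]
      ring
  · by_cases hj : j ∈ S
    · rw [signVector_skip hj hj1 (by tauto), signVector_eq_zero_iff.2 hj1]
      ring
    · simp [signVector_eq_zero_iff.2 hj, signVector_eq_zero_iff.2 hj1,
        signVector_eq_zero_iff.2 (show j + 2 ∉ S by tauto)]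

/-- Each of the linear forms `c 0`, `c k - c (k + 1)` and, at the turns `k`, `c (k + 1)` and
`c k - c (k + 1) + c (k + 2)` that vanishes at `c` vanishes at `d`. -/
structure ZerosSubset (T : ℕ → Prop) (c d : ℕ →₀ ℝ) : Prop where
  zero : c 0 = 0 → d 0 = 0
  succ : ∀ k, c k = c (k + 1) → d k = d (k + 1)
  turn_mid : ∀ k, T k → c (k + 1) = 0 → d (k + 1) = 0
  turn : ∀ k, T k → c k - c (k + 1) + c (k + 2) = 0 → d k - d (k + 1) + d (k + 2) = 0

theorem ZerosSubset.apply_eq_zero_of_forall_le (h : ZerosSubset T c d) (hc : ∀ i ≤ k, c i = 0) :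
    d k = 0 := by
  induction k with
  | zero => exact h.zero (hc 0 le_rfl)
  | succ k ih =>
    rw [← h.succ k (by rw [hc k k.le_succ, hc (k + 1) le_rfl])]
    exact ih fun i hi => hc i (hi.trans k.le_succ)

theorem ZerosSubset.apply_eq_zero_of_forall_ge (h : ZerosSubset T c d) (hc : ∀ i ≥ k, c i = 0) :
    d k = 0 := by
  have hconst : ∀ i ≥ k, d i = d k := fun i hi => by
    induction i, hi using Nat.le_induction with
    | base => rfl
    | succ i hi ih => rw [← ih, h.succ i (by rw [hc i hi, hc (i + 1) (by omega)])]
  obtain ⟨N, hN⟩ := d.support.bddAbove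
  rw [← hconst (max k (N + 1)) (le_max_left _ _), ← Finsupp.notMem_support_iff]
  intro hmem
  have := hN hmem
  omega

theorem ZerosSubset.eq_zero (h : ZerosSubset T 0 d) : d = 0 :=
  Finsupp.ext fun _ => h.apply_eq_zero_of_forall_le fun _ _ => rfl

theorem IsLinked.apply_eq_zero_of_notMem (hS : IsLinked T S)
    (h : ZerosSubset T (signVector S) d) (hk : k ∉ S) : d k = 0 := by
  by_cases hbelow : ∃ a ∈ S, a < k
  · by_cases habove : ∃ b ∈ S, k < b
    · obtain ⟨a, ha, hak⟩ := hbelow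
      obtain ⟨b, hb, hkb⟩ := habove
      obtain ⟨j, rfl, -, -, hT⟩ := hS.exists_turn a ha b hb k hak hkb hk
      exact h.turn_mid j hT (signVector_eq_zero_iff.2 hk)
    · push Not at habove
      refine h.apply_eq_zero_of_forall_ge fun i hi => signVector_eq_zero_iff.2 fun hiS => hk ?_
      rwa [← (habove i hiS).antisymm hi]
  · push Not at hbelow
    refine h.apply_eq_zero_of_forall_le fun i hi => signVector_eq_zero_iff.2 fun hiS => hk ?_
    rwa [← hi.antisymm (hbelow i hiS)]

theorem IsLinked.exists_eq_smul_signVector (hS : IsLinked T S)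
    (h : ZerosSubset T (signVector S) d) : ∃ t : ℝ, d = t • signVector S := by
  set a := S.min' hS.nonempty
  have ha0 : signVector S a ≠ 0 := signVector_eq_zero_iff.not_left.2 (S.min'_mem hS.nonempty)
  refine ⟨d a / signVector S a, Finsupp.ext fun k => ?_⟩
  rw [Finsupp.smul_apply, smul_eq_mul]
  by_cases hk : k ∈ S
  · refine hS.induction (P := fun k => d k = d a / signVector S a * signVector S k) ?_ ?_ ?_ k hk
    · rw [div_mul_cancel₀ _ ha0]
    · intro j hj hj1 ih
      have hsucc := signVector_succ hj hj1
      rw [← h.succ j hsucc.symm, hsucc, ih]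
    · intro j hj hj1 hj2 hT ih
      have hturn := h.turn j hT (signVector_sub_add_eq_zero (by tauto))
      rw [hS.apply_eq_zero_of_notMem h hj1] at hturn
      rw [signVector_skip hj hj1 hj2]
      linarith
  · rw [hS.apply_eq_zero_of_notMem h hk, signVector_eq_zero_iff.2 hk, mul_zero]

/-- A linked subset `S` of the support of `c` with minimum `j` whose sign vector satisfies, from
index `j` on, the equations that `c` satisfies (in terms of membership in `S`). -/
structure IsTraceFrom (T : ℕ → Prop) (c : ℕ →₀ ℝ) (j : ℕ) (S : Finset ℕ) : Prop where
  linked : IsLinked T S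
  subset : S ⊆ c.support
  mem : j ∈ S
  le : ∀ k ∈ S, j ≤ k
  succ : ∀ k ≥ j, c k = c (k + 1) → (k ∈ S ↔ k + 1 ∈ S)
  turn : ∀ k ≥ j, T k → c k - c (k + 1) + c (k + 2) = 0 → (k ∈ S ↔ (k + 1 ∈ S ↔ k + 2 ∉ S))

theorem isTraceFrom_singleton (hj : c j ≠ 0) (hsucc : c j ≠ c (j + 1))
    (hturn : T j → c j - c (j + 1) + c (j + 2) ≠ 0) : IsTraceFrom T c j {j} where
  linked := .singleton T j
  subset := by simpa using hj
  mem := by simp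
  le := by simp
  succ := by grind
  turn := by grind

theorem isTraceFrom_pair (hT : ∀ k, T k → ¬T (k + 1)) (hj : c j ≠ 0) (hj1 : c (j + 1) ≠ 0)
    (hTj : T j) (hturn : c j - c (j + 1) + c (j + 2) = 0) : IsTraceFrom T c j {j, j + 1} where
  linked := (IsLinked.singleton T (j + 1)).insert (Finset.mem_singleton_self _) (by simp) (.inl rfl)
  subset := by simp [Finset.insert_subset_iff, hj, hj1]
  mem := by simp
  le := by simp
  succ := by grind
  turn := by grind

theorem IsTraceFrom.insert_succ (hS : IsTraceFrom T c (j + 1) S) (h : c j = c (j + 1)) :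
    IsTraceFrom T c j (insert j S) where
  linked := hS.linked.insert hS.mem hS.le (.inl rfl)
  subset := by
    have hj1 := Finsupp.mem_support_iff.1 (hS.subset hS.mem)
    exact Finset.insert_subset (Finsupp.mem_support_iff.2 (h ▸ hj1)) hS.subset
  mem := Finset.mem_insert_self j S
  le k hk := by
    rcases Finset.mem_insert.1 hk with rfl | hk
    · exact le_rfl
    · have := hS.le k hk
      omega
  succ k hjk hk := by
    rcases hjk.eq_or_lt with rfl | hlt
    · simp [hS.mem]
    · simpa [show k ≠ j by omega, show k + 1 ≠ j by omega] using hS.succ k hlt hk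
  turn k hjk hTk hk := by
    rcases hjk.eq_or_lt with rfl | hlt
    · have hj2 : j + 2 ∉ S := fun hmem => Finsupp.mem_support_iff.1 (hS.subset hmem) (by linarith)
      simp [hS.mem, hj2]
    · simpa [show k ≠ j by omega, show k + 1 ≠ j by omega, show k + 2 ≠ j by omega]
        using hS.turn k hlt hTk hk

theorem IsTraceFrom.insert_skip (hT : ∀ k, T k → ¬T (k + 1)) (hS : IsTraceFrom T c (j + 2) S)
    (hTj : T j) (hj1 : c (j + 1) = 0) (hturn : c j - c (j + 1) + c (j + 2) = 0) :
    IsTraceFrom T c j (insert j S) := by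
  have hj2 : c (j + 2) ≠ 0 := Finsupp.mem_support_iff.1 (hS.subset hS.mem)
  have hj : c j ≠ 0 := fun h0 => hj2 (by linarith)
  have hj1S : j + 1 ∉ S := fun hmem => Finsupp.mem_support_iff.1 (hS.subset hmem) hj1
  refine ⟨hS.linked.insert hS.mem hS.le (.inr ⟨rfl, hTj⟩),
    Finset.insert_subset (Finsupp.mem_support_iff.2 hj) hS.subset, Finset.mem_insert_self j S,
    fun k hk => ?_, fun k hjk hk => ?_, fun k hjk hTk hk => ?_⟩
  · rcases Finset.mem_insert.1 hk with rfl | hk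
    · exact le_rfl
    · have := hS.le k hk
      omega
  · obtain rfl | rfl | hlt : k = j ∨ k = j + 1 ∨ j + 2 ≤ k := by omega
    · exact absurd (hk.trans hj1) hj
    · exact absurd (hk.symm.trans hj1) hj2
    · simpa [show k ≠ j by omega, show k + 1 ≠ j by omega] using hS.succ k hlt hk
  · obtain rfl | rfl | hlt : k = j ∨ k = j + 1 ∨ j + 2 ≤ k := by omega
    · simp [hS.mem, hj1S]
    · exact absurd hTk (hT j hTj)
    · simpa [show k ≠ j by omega, show k + 1 ≠ j by omega, show k + 2 ≠ j by omega]
        using hS.turn k hlt hTk hk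

theorem exists_isTraceFrom (hT : ∀ k, T k → ¬T (k + 1)) (hj : c j ≠ 0) :
    ∃ S, IsTraceFrom T c j S := by
  obtain ⟨N, hN⟩ := c.support.bddAbove
  have hjN : j ≤ N := hN (Finsupp.mem_support_iff.2 hj)
  induction hm : N - j using Nat.strong_induction_on generalizing j with
  | _ m ih =>
    have step : ∀ r, j < r → c r ≠ 0 → ∃ S, IsTraceFrom T c r S := fun r hjr hr => by
      have hrN : r ≤ N := hN (Finsupp.mem_support_iff.2 hr)
      exact ih (N - r) (by omega) hr hrN rfl
    by_cases hsucc : c j = c (j + 1)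
    · obtain ⟨S, hS⟩ := step (j + 1) (by omega) (hsucc ▸ hj)
      exact ⟨_, hS.insert_succ hsucc⟩
    by_cases hturn : T j ∧ c j - c (j + 1) + c (j + 2) = 0
    · by_cases hj1 : c (j + 1) = 0
      · obtain ⟨S, hS⟩ := step (j + 2) (by omega) fun hj2 => hj (by linarith)
        exact ⟨_, hS.insert_skip hT hturn.1 hj1 hturn.2⟩
      · exact ⟨_, isTraceFrom_pair hT hj hj1 hturn.1 hturn.2⟩
    · exact ⟨_, isTraceFrom_singleton hj hsucc fun hTj h => hturn ⟨hTj, h⟩⟩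

theorem IsTraceFrom.zerosSubset (hS : IsTraceFrom T c j S) (hj : ∀ k < j, c k = 0) :
    ZerosSubset T c (signVector S) := by
  have hj0 : c j ≠ 0 := Finsupp.mem_support_iff.1 (hS.subset hS.mem)
  have hlt : ∀ k < j, k ∉ S := fun k hkj hk => hkj.not_ge (hS.le k hk)
  have hzero : ∀ k, c k = 0 → signVector S k = 0 := fun k hk =>
    signVector_eq_zero_iff.2 fun hmem => Finsupp.mem_support_iff.1 (hS.subset hmem) hk
  have hsucc : ∀ k, c k = c (k + 1) → (k ∈ S ↔ k + 1 ∈ S) := fun k hk => by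
    by_cases hjk : j ≤ k
    · exact hS.succ k hjk hk
    · have hne : k + 1 ≠ j := by
        rintro rfl
        exact hj0 (hk ▸ hj k (by omega))
      exact iff_of_false (hlt k (by omega)) (hlt (k + 1) (by omega))
  refine ⟨hzero 0, fun k hk => signVector_eq_succ (hsucc k hk), fun k _ => hzero (k + 1),
    fun k hTk hk => signVector_sub_add_eq_zero ?_⟩
  by_cases hjk : j ≤ k
  · exact hS.turn k hjk hTk hk
  · have hk0 : c k = 0 := hj k (by omega)
    have hkS : k ∉ S := hlt k (by omega)
    have := hsucc (k + 1) (by linarith)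
    tauto

theorem exists_isLinked_zerosSubset (hT : ∀ k, T k → ¬T (k + 1)) (hc : c ≠ 0) :
    ∃ S, IsLinked T S ∧ S ⊆ c.support ∧ ZerosSubset T c (signVector S) := by
  have hne : c.support.Nonempty := Finsupp.support_nonempty_iff.2 hc
  obtain ⟨S, hS⟩ := exists_isTraceFrom hT
    (Finsupp.mem_support_iff.1 (c.support.min'_mem hne))
  exact ⟨S, hS.linked, hS.subset, hS.zerosSubset fun k hk => by
    by_contra h
    exact hk.not_ge (c.support.min'_le k (Finsupp.mem_support_iff.2 h))⟩

end LinkedSets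

section SnakeGraph

variable {n : ℕ} {w : ℕ → Letter} {S : Finset ℕ}

/-- The long edges `{k, k + 2}` of `G(w)`: the letters `w (k + 1)` and `w (k + 2)` differ. -/
def IsTurn (n : ℕ) (w : ℕ → Letter) (k : ℕ) : Prop :=
  k + 2 ≤ n ∧ w (k + 1) ≠ w (k + 2)

theorem InV.not_isTurn_succ (hw : InV n w) (k : ℕ) (hk : IsTurn n w k) : ¬IsTurn n w (k + 1) :=
  fun hk' => (hw (k + 1) (by omega) hk'.1).elim hk.2 hk'.2

theorem isLinked_of_mem_GSets (hS : (S : Set ℕ) ∈ GSets n w) : IsLinked (IsTurn n w) S where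
  nonempty := hS.1
  exists_turn a ha b hb k hak hkb hk := by
    induction hS.2.2 a ha b hb with
    | refl => omega
    | @tail x y _ hxy ih =>
      obtain ⟨hx, hy, hadj⟩ := hxy
      by_cases hkx : k < x
      · exact ih hx hkx
      have hxk : x ≠ k := fun h => hk (h ▸ hx)
      rcases hadj with _ | _ | ⟨rfl, hn, hturn⟩ | _
      · omega
      · omega
      · exact ⟨x, by omega, hx, hy, hn, hturn⟩
      · omega

theorem snakeAdj.symm {i j : ℕ} (h : snakeAdj n w i j) : snakeAdj n w j i := by
  unfold snakeAdj at *
  tauto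

theorem IsLinked.mem_GSets (hS : IsLinked (IsTurn n w) S) (hn : ∀ i ∈ S, i ≤ n) :
    (S : Set ℕ) ∈ GSets n w := by
  set r : ℕ → ℕ → Prop := fun x y => x ∈ (S : Set ℕ) ∧ y ∈ (S : Set ℕ) ∧ snakeAdj n w x y
  have hsymm : Std.Symm r := ⟨fun x y h => ⟨h.2.1, h.1, h.2.2.symm⟩⟩
  have hmin : ∀ b ∈ S, Relation.ReflTransGen r (S.min' hS.nonempty) b :=
    hS.induction .refl (fun j hj hj1 ih => ih.tail ⟨hj, hj1, .inl ⟨rfl, hn _ hj1⟩⟩)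
      fun j hj _ hj2 hT ih => ih.tail ⟨hj, hj2, .inr (.inr (.inl ⟨rfl, hn _ hj2, hT.2⟩))⟩
  exact ⟨hS.nonempty, hn, fun a ha b hb =>
    (symm (hmin a ha)).trans (hmin b hb)⟩

theorem coe_mem_GSets_iff :
    (S : Set ℕ) ∈ GSets n w ↔ IsLinked (IsTurn n w) S ∧ ∀ i ∈ S, i ≤ n :=
  ⟨fun h => ⟨isLinked_of_mem_GSets h, h.2.1⟩, fun h => h.1.mem_GSets h.2⟩

theorem finite_of_mem_GSets {S : Set ℕ} (hS : S ∈ GSets n w) : S.Finite :=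
  (Set.finite_Iic n).subset hS.2.1

end SnakeGraph

section SnakeOrder

variable {n : ℕ} {w : ℕ → Letter}

theorem snakeSide_zero (w : ℕ → Letter) : snakeSide w 0 = 0 := by
  simp [snakeSide]

theorem snakeSide_succ_eq_or (w : ℕ → Letter) (m : ℕ) :
    snakeSide w (m + 1) = 2 * m + 1 ∨ snakeSide w (m + 1) = 2 * m + 2 := by
  unfold snakeSide
  split_ifs <;> omega

theorem snakeSide_le (w : ℕ → Letter) (m : ℕ) : snakeSide w m ≤ 2 * m := by
  unfold snakeSide
  split_ifs <;> omega

theorem snakeSide_eq_zero_iff {m : ℕ} : snakeSide w m = 0 ↔ m = 0 := by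
  unfold snakeSide; grind

theorem snakeSide_eq_one_iff {m : ℕ} : snakeSide w m = 1 ↔ m = 1 ∧ w 1 = Letter.L := by
  unfold snakeSide; grind

theorem snakeSide_eq_two_iff {m : ℕ} : snakeSide w m = 2 ↔ m = 1 ∧ w 1 ≠ Letter.L := by
  unfold snakeSide; grind

theorem snakeSide_eq_odd_iff {k m : ℕ} :
    snakeSide w m = 2 * k + 3 ↔ m = k + 2 ∧ w (k + 1) ≠ w (k + 2) := by
  unfold snakeSide; grind

theorem snakeSide_eq_even_iff {k m : ℕ} :
    snakeSide w m = 2 * k + 4 ↔ m = k + 2 ∧ w (k + 1) = w (k + 2) := by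
  unfold snakeSide; grind

theorem snakeCov_iff {a b : ℕ} :
    SnakeCov n w a b ↔ (a = 1 ∧ b = 0) ∨ ∃ m ≤ n, (a = 2 * m + 2 ∧ b = snakeSide w m) ∨
      (a = 2 * m + 3 ∧ (b = 2 * m + 1 ∨ b = 2 * m + 2)) := by
  constructor
  · rintro (_ | _ | _ | _ | ⟨m, -, hm⟩ | ⟨m, -, hm⟩ | ⟨m, -, hm⟩)
    · exact .inl ⟨rfl, rfl⟩
    · exact .inr ⟨0, n.zero_le, .inl ⟨rfl, (snakeSide_zero w).symm⟩⟩
    · exact .inr ⟨0, n.zero_le, by simp⟩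
    · exact .inr ⟨0, n.zero_le, by simp⟩
    · exact .inr ⟨m, hm, by simp⟩
    · exact .inr ⟨m, hm, by simp⟩
    · exact .inr ⟨m, hm, by simp⟩
  · rintro (⟨rfl, rfl⟩ | ⟨m, hm, h⟩)
    · exact .cov10
    rcases Nat.eq_zero_or_pos m with rfl | hpos
    · rw [snakeSide_zero] at h
      rcases h with ⟨rfl, rfl⟩ | ⟨rfl, rfl | rfl⟩
      exacts [.cov20, .cov31, .cov32]
    · rcases h with ⟨rfl, rfl⟩ | ⟨rfl, rfl | rfl⟩
      exacts [.covSide m hpos hm, .covOdd m hpos hm, .covBot m hpos hm]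

theorem snakeHatLE_of_lt {a b : ℕ} (ha : a < 2 * n + 4) :
    SnakeHatLE n w a b ↔ b = 2 * n + 4 ∨ b < 2 * n + 4 ∧ SnakeLE n w a b := by
  simp only [SnakeHatLE, ha, true_and, show a ≠ 2 * n + 5 by omega, false_or]

theorem snakeHatLE_iff_exists_snakeCov {a b : ℕ} (ha : a < 2 * n + 4)
    (hcov : ∃ c, SnakeCov n w a c) :
    SnakeHatLE n w a b ↔ b = a ∨ ∃ c, SnakeCov n w a c ∧ SnakeHatLE n w c b := by
  have hlt : ∀ c, SnakeCov n w a c → c < 2 * n + 4 := fun c hc => (snakeCov_lt hc).trans ha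
  rw [snakeHatLE_of_lt ha, SnakeLE, Relation.ReflTransGen.cases_head_iff]
  constructor
  · rintro (htop | ⟨hb, rfl | ⟨c, hc, hcb⟩⟩)
    · exact hcov.imp (fun c hc => ⟨hc, .inr (.inl htop)⟩) |> .inr
    · exact .inl rfl
    · exact .inr ⟨c, hc, .inr (.inr ⟨hlt c hc, hb, hcb⟩)⟩
  · rintro (rfl | ⟨c, hc, hcb⟩)
    · exact .inr ⟨ha, .inl rfl⟩
    · exact ((snakeHatLE_of_lt (hlt c hc)).1 hcb).imp_right fun h => ⟨h.1, .inr ⟨c, hc, h.2⟩⟩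

theorem snakeHatLE_zero {b : ℕ} : SnakeHatLE n w 0 b ↔ b = 0 ∨ b = 2 * n + 4 := by
  have hmax : SnakeLE n w 0 b ↔ b = 0 :=
    ⟨fun h => Nat.le_zero.1 (snakeLE_le h), fun h => h ▸ .refl⟩
  rw [snakeHatLE_of_lt (by omega), hmax]
  omega

theorem snakeHatLE_one {b : ℕ} : SnakeHatLE n w 1 b ↔ b = 1 ∨ SnakeHatLE n w 0 b := by
  have hcov : ∀ c, SnakeCov n w 1 c ↔ c = 0 := fun c => by rw [snakeCov_iff]; grind
  simp [snakeHatLE_iff_exists_snakeCov (a := 1) (by omega) ⟨0, .cov10⟩, hcov]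

theorem snakeHatLE_even {m b : ℕ} (hm : m ≤ n) :
    SnakeHatLE n w (2 * m + 2) b ↔ b = 2 * m + 2 ∨ SnakeHatLE n w (snakeSide w m) b := by
  have hcov : ∀ c, SnakeCov n w (2 * m + 2) c ↔ c = snakeSide w m := fun c => by
    rw [snakeCov_iff]; grind
  simp [snakeHatLE_iff_exists_snakeCov (a := 2 * m + 2) (by omega) ⟨_, (hcov _).2 rfl⟩, hcov]

theorem snakeHatLE_odd {m b : ℕ} (hm : m ≤ n) :
    SnakeHatLE n w (2 * m + 3) b ↔
      b = 2 * m + 3 ∨ SnakeHatLE n w (2 * m + 1) b ∨ SnakeHatLE n w (2 * m + 2) b := by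
  have hcov : ∀ c, SnakeCov n w (2 * m + 3) c ↔ c = 2 * m + 1 ∨ c = 2 * m + 2 := fun c => by
    rw [snakeCov_iff]
    exact ⟨by grind, fun h => .inr ⟨m, hm, .inr ⟨rfl, h⟩⟩⟩
  simp [snakeHatLE_iff_exists_snakeCov (a := 2 * m + 3) (by omega) ⟨_, (hcov _).2 (.inl rfl)⟩,
    hcov, or_and_right, exists_or]

theorem SnakeHatLE.eq_bot_or_le {a b : ℕ} (h : SnakeHatLE n w a b) (hb : b ≠ 2 * n + 4) :
    a = 2 * n + 5 ∨ a < 2 * n + 4 ∧ b ≤ a :=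
  h.imp_right fun h => (h.resolve_left hb).imp_right fun h => snakeLE_le h.2

theorem snakeHatLE_refl {a : ℕ} (ha : a < 2 * n + 6) : SnakeHatLE n w a a :=
  le_refl (α := SnakeHat n w) ⟨a, ha⟩

theorem SnakeHatLE.trans {a b c : ℕ} (hab : SnakeHatLE n w a b) (hbc : SnakeHatLE n w b c) :
    SnakeHatLE n w a c := by
  rcases hab with hbot | htop | ⟨ha, hb, hab⟩
  · exact .inl hbot
  · rcases hbc with _ | htop' | _
    · omega
    · exact .inr (.inl htop')
    · omega
  · rcases hbc with _ | htop | ⟨_, hc, hbc⟩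
    · omega
    · exact .inr (.inl htop)
    · exact .inr (.inr ⟨ha, hc, Relation.ReflTransGen.trans hab hbc⟩)

theorem snakeHatLE_odd_of_le {k b : ℕ} (hk : k ≤ n + 1) (hb : b ≤ 2 * k + 1) :
    SnakeHatLE n w (2 * k + 1) b := by
  induction k with
  | zero =>
    rw [show 2 * 0 + 1 = 1 from rfl, snakeHatLE_one, snakeHatLE_zero]
    omega
  | succ k ih =>
    rw [show 2 * (k + 1) + 1 = 2 * k + 3 by ring, snakeHatLE_odd (by omega)]
    obtain hle | rfl | rfl : b ≤ 2 * k + 1 ∨ b = 2 * k + 2 ∨ b = 2 * k + 3 := by omega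
    · exact .inr (.inl (ih (by omega) hle))
    · exact .inr (.inr (snakeHatLE_refl (by omega)))
    · exact .inl rfl

theorem snakeHatLE_snakeSide {m q : ℕ} (hm : m ≤ n) :
    SnakeHatLE n w (snakeSide w m) q ↔
      SnakeHatLE n w (2 * m + 1) q ∧ SnakeHatLE n w (2 * m + 2) q := by
  have hside := snakeSide_le w m
  constructor
  · exact fun h => ⟨(snakeHatLE_odd_of_le (by omega) (by omega)).trans h,
      (snakeHatLE_even hm).2 (.inr h)⟩
  · rintro ⟨hodd, heven⟩
    refine ((snakeHatLE_even hm).1 heven).resolve_left ?_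
    rintro rfl
    rcases hodd.eq_bot_or_le (by omega) with h | h <;> omega

theorem snakeHatLE_odd_of_le_of_le {m a : ℕ} (hm : m ≤ n) (hodd : SnakeHatLE n w a (2 * m + 1))
    (heven : SnakeHatLE n w a (2 * m + 2)) : SnakeHatLE n w a (2 * m + 3) := by
  induction a using Nat.strong_induction_on with
  | _ a ih =>
    rcases heven.eq_bot_or_le (by omega) with hbot | ⟨ha, hle⟩
    · exact .inl hbot
    obtain ⟨k, rfl | rfl⟩ : ∃ k, a = 2 * k + 2 ∨ a = 2 * k + 3 := ⟨(a - 2) / 2, by omega⟩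
    · have hside := snakeSide_le w k
      have hodd' := ((snakeHatLE_even (by omega)).1 hodd).resolve_left (by omega)
      rcases (snakeHatLE_even (by omega)).1 heven with heq | heven'
      · rcases hodd'.eq_bot_or_le (by omega) with h | h <;> omega
      · exact (snakeHatLE_even (by omega)).2 (.inr (ih _ (by omega) hodd' heven'))
    · exact snakeHatLE_odd_of_le (k := k + 1) (by omega) (by omega)

theorem snakeHatLE_even_or_of_odd {m y q : ℕ} (hq : ∀ k ≤ n, q ≠ 2 * k + 3) (hm : m ≤ n)
    (hy : y < 2 * m + 2) (hmy : ¬SnakeHatLE n w (2 * m + 2) y)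
    (hmq : SnakeHatLE n w (2 * m + 3) q) : SnakeHatLE n w (2 * m + 2) q ∨ SnakeHatLE n w y q := by
  have hsplit : ∀ k ≤ n, SnakeHatLE n w (2 * k + 3) q →
      SnakeHatLE n w (2 * k + 1) q ∨ SnakeHatLE n w (2 * k + 2) q :=
    fun k hk h => ((snakeHatLE_odd hk).1 h).resolve_left (hq k hk)
  induction m with
  | zero =>
    have hy0 : y ≠ 0 := by
      rintro rfl
      rw [snakeHatLE_even hm, snakeSide_zero] at hmy
      exact hmy (.inr (snakeHatLE_refl (by omega)))
    obtain rfl : y = 2 * 0 + 1 := by omega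
    exact (hsplit 0 hm hmq).symm
  | succ m ih =>
    rcases hsplit _ hm hmq with hodd | heven
    swap
    · exact .inl heven
    rw [snakeHatLE_even hm, not_or] at hmy
    rw [snakeHatLE_even hm]
    rcases eq_or_ne y (2 * (m + 1) + 1) with rfl | hy'
    · exact .inr hodd
    rcases snakeSide_succ_eq_or w m with hside | hside
    · rw [hside] at hmy ⊢
      obtain rfl : y = 2 * m + 2 := by
        by_contra hne
        exact hmy.2 (snakeHatLE_odd_of_le (by omega) (by omega))
      exact (hsplit m (by omega) hodd).imp_left .inr
    · rw [hside] at hmy ⊢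
      have hne : y ≠ 2 * m + 2 := by
        rintro rfl
        exact hmy.2 (snakeHatLE_refl (by omega))
      exact (ih (by omega) (by omega) hmy.2 hodd).imp_left .inr

theorem exists_snakeHatLE_iff_or {x y : ℕ} (hx : x < 2 * n + 6) (hy : y < 2 * n + 6) :
    ∃ z < 2 * n + 6, ∀ q, (∀ k ≤ n, q ≠ 2 * k + 3) →
      (SnakeHatLE n w z q ↔ SnakeHatLE n w x q ∨ SnakeHatLE n w y q) := by
  wlog hyx : y ≤ x generalizing x y
  · obtain ⟨z, hz, hzq⟩ := this hy hx (by omega)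
    exact ⟨z, hz, fun q hq => (hzq q hq).trans or_comm⟩
  by_cases hxy : SnakeHatLE n w x y
  · exact ⟨x, hx, fun q _ => (or_iff_left_of_imp hxy.trans).symm⟩
  by_cases hyx' : SnakeHatLE n w y x
  · exact ⟨y, hy, fun q _ => (or_iff_right_of_imp hyx'.trans).symm⟩
  have hbot : x ≠ 2 * n + 5 := fun h => hxy (.inl h)
  have htop : x ≠ 2 * n + 4 := fun h => hyx' (.inr (.inl h))
  have hne : y ≠ x := by
    rintro rfl
    exact hxy (snakeHatLE_refl hx)
  rcases Nat.even_or_odd' x with ⟨k, rfl | rfl⟩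
  · obtain ⟨m, rfl⟩ := Nat.exists_eq_succ_of_ne_zero (show k ≠ 0 by omega)
    have hm : m ≤ n := by omega
    refine ⟨2 * m + 3, by omega, fun q hq =>
      ⟨snakeHatLE_even_or_of_odd hq hm (by omega) hxy, ?_⟩⟩
    rintro (h | h)
    · exact (snakeHatLE_odd hm).2 (.inr (.inr h))
    · exact (snakeHatLE_odd_of_le (k := m + 1) (by omega) (by omega)).trans h
  · exact absurd (snakeHatLE_odd_of_le (by omega) (by omega)) hxy

end SnakeOrder

namespace SnakeHat

variable {n : ℕ} {w : ℕ → Letter}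

instance : Finite (SnakeHat n w) :=
  inferInstanceAs (Finite (Fin _))

/-- The element of `P̂(w)` with label `x`; labels `x ≥ 2n + 6` wrap around. -/
def node (n : ℕ) (w : ℕ → Letter) (x : ℕ) : SnakeHat n w :=
  Fin.ofNat (2 * n + 6) x

theorem val_node {x : ℕ} (hx : x < 2 * n + 6) : (node n w x).1 = x :=
  Nat.mod_eq_of_lt hx

theorem node_val (x : SnakeHat n w) : node n w x.1 = x :=
  Fin.ext (val_node x.2)

theorem node_inj {x y : ℕ} (hx : x < 2 * n + 6) (hy : y < 2 * n + 6) :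
    node n w x = node n w y ↔ x = y :=
  ⟨fun h => by rw [← val_node (w := w) hx, h, val_node hy], congrArg _⟩

theorem exists_eq_node_cases (x : SnakeHat n w) :
    x = node n w 0 ∨ x = node n w 1 ∨ x = node n w 2 ∨
      (∃ k ≤ n + 1, x = node n w (2 * k + 3)) ∨ ∃ k ≤ n, x = node n w (2 * k + 4) := by
  obtain ⟨x, hx⟩ := x
  have hnode : node n w x = ⟨x, hx⟩ := node_val ⟨x, hx⟩
  obtain rfl | rfl | rfl | ⟨k, rfl | rfl⟩ :
      x = 0 ∨ x = 1 ∨ x = 2 ∨ ∃ k, x = 2 * k + 3 ∨ x = 2 * k + 4 := by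
    by_cases h : x < 3
    · omega
    · exact .inr (.inr (.inr ⟨(x - 3) / 2, by omega⟩))
  · exact .inl hnode.symm
  · exact .inr (.inl hnode.symm)
  · exact .inr (.inr (.inl hnode.symm))
  · exact .inr (.inr (.inr (.inl ⟨k, by omega, hnode.symm⟩)))
  · exact .inr (.inr (.inr (.inr ⟨k, by omega, hnode.symm⟩)))

theorem node_le_iff {a : ℕ} {b : SnakeHat n w} (ha : a < 2 * n + 6) :
    node n w a ≤ b ↔ SnakeHatLE n w a b.1 := by
  conv_rhs => rw [← val_node (w := w) ha]
  rfl

theorem le_node_iff {a : SnakeHat n w} {b : ℕ} (hb : b < 2 * n + 6) :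
    a ≤ node n w b ↔ SnakeHatLE n w a.1 b := by
  conv_rhs => rw [← val_node (w := w) hb]
  rfl

theorem isTop_node : IsTop (node n w (2 * n + 4)) :=
  fun _ => (le_node_iff (by omega)).2 (.inr (.inl rfl))

theorem isGLB_node {m : ℕ} (hm : m ≤ n) :
    IsGLB {node n w (2 * m + 1), node n w (2 * m + 2)} (node n w (2 * m + 3)) := by
  constructor
  · rintro a (rfl | rfl)
    · rw [node_le_iff (by omega), val_node (by omega), snakeHatLE_odd hm]
      exact .inr (.inl (snakeHatLE_refl (by omega)))
    · rw [node_le_iff (by omega), val_node (by omega), snakeHatLE_odd hm]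
      exact .inr (.inr (snakeHatLE_refl (by omega)))
  · intro a ha
    rw [le_node_iff (by omega)]
    exact snakeHatLE_odd_of_le_of_le hm ((le_node_iff (by omega)).1 (ha (by simp)))
      ((le_node_iff (by omega)).1 (ha (by simp)))

theorem val_ne_of_meetIrred {x : SnakeHat n w} (hx : MeetIrred x) :
    x.1 ≠ 2 * n + 4 ∧ ∀ m ≤ n, x.1 ≠ 2 * m + 3 := by
  refine ⟨fun h => hx.1 (by rw [← node_val x, h]; exact isTop_node), fun m hm h => ?_⟩
  have hglb := isGLB_node (w := w) hm
  rw [← h, node_val] at hglb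
  rcases hx.2 _ _ hglb with h' | h' <;>
  · rw [h', val_node (by omega)] at h
    omega

theorem node_snakeSide_le_iff {m : ℕ} (hm : m ≤ n) {q : SnakeHat n w} :
    node n w (snakeSide w m) ≤ q ↔ node n w (2 * m + 1) ≤ q ∧ node n w (2 * m + 2) ≤ q := by
  have hside := snakeSide_le w m
  rw [node_le_iff (by omega), node_le_iff (by omega), node_le_iff (by omega)]
  exact snakeHatLE_snakeSide hm

theorem node_odd_le_iff {m : ℕ} (hm : m ≤ n) {q : SnakeHat n w} (hq : MeetIrred q) :
    node n w (2 * m + 3) ≤ q ↔ node n w (2 * m + 1) ≤ q ∨ node n w (2 * m + 2) ≤ q := by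
  rw [node_le_iff (by omega), node_le_iff (by omega), node_le_iff (by omega)]
  exact (snakeHatLE_odd hm).trans (or_iff_right ((val_ne_of_meetIrred hq).2 m hm))

theorem exists_unique_cover {x : ℕ} (hx : x < 2 * n + 6) (htop : x ≠ 2 * n + 4)
    (hodd : ∀ m ≤ n, x ≠ 2 * m + 3) :
    ∃ u < 2 * n + 6, (∀ y < 2 * n + 6, SnakeHatLE n w x y → y = x ∨ SnakeHatLE n w u y) ∧
      ¬SnakeHatLE n w u x := by
  obtain rfl | rfl | rfl | ⟨m, hm, rfl⟩ :
      x = 2 * n + 5 ∨ x = 0 ∨ x = 1 ∨ ∃ m ≤ n, x = 2 * m + 2 := by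
    by_contra! h
    obtain ⟨k, rfl | rfl⟩ : ∃ k, x = 2 * k + 2 ∨ x = 2 * k + 3 := ⟨(x - 2) / 2, by omega⟩
    · exact h.2.2.2 k (by omega) rfl
    · exact hodd k (by omega) rfl
  · refine ⟨2 * (n + 1) + 1, by omega, fun y hy _ => ?_, fun h => ?_⟩
    · obtain hbot | htop' | hlt : y = 2 * n + 5 ∨ y = 2 * n + 4 ∨ y ≤ 2 * (n + 1) + 1 := by omega
      exacts [.inl hbot, .inr (.inr (.inl htop')), .inr (snakeHatLE_odd_of_le le_rfl hlt)]
    · rcases h.eq_bot_or_le (by omega) with h | h <;> omega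
  · refine ⟨2 * n + 4, by omega, fun y _ h => ?_, fun h => ?_⟩
    · exact (snakeHatLE_zero.1 h).imp_right fun htop' => .inr (.inl htop')
    · rcases h.eq_bot_or_le (by omega) with h | h <;> omega
  · exact ⟨0, by omega, fun y _ => snakeHatLE_one.1, fun h => by rw [snakeHatLE_zero] at h; omega⟩
  · have hside := snakeSide_le w m
    refine ⟨snakeSide w m, by omega, fun y _ => (snakeHatLE_even hm).1, fun h => ?_⟩
    rcases h.eq_bot_or_le (by omega) with h | h <;> omega

theorem meetIrred_iff {x : SnakeHat n w} :
    MeetIrred x ↔ x.1 ≠ 2 * n + 4 ∧ ∀ m ≤ n, x.1 ≠ 2 * m + 3 := by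
  refine ⟨val_ne_of_meetIrred, fun ⟨htop, hodd⟩ => ?_⟩
  obtain ⟨u, hu, hcover, hux⟩ := exists_unique_cover (w := w) x.2 htop hodd
  refine meetIrred_of_unique_cover (u := node n w u) (fun y hxy => ?_) ?_
  · exact (hcover y.1 y.2 hxy).imp Fin.ext (node_le_iff hu).2
  · rwa [node_le_iff hu]

theorem exists_le_iff_or (x y : SnakeHat n w) :
    ∃ z, ∀ q, MeetIrred q → (z ≤ q ↔ x ≤ q ∨ y ≤ q) := by
  obtain ⟨z, hz, hzq⟩ := exists_snakeHatLE_iff_or (w := w) x.2 y.2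
  exact ⟨node n w z, fun q hq => (node_le_iff hz).trans (hzq q.1 (val_ne_of_meetIrred hq).2)⟩

end SnakeHat

section SquareRelations

open SnakeHat

variable {n : ℕ} {w : ℕ → Letter} {c d : ℕ →₀ ℝ} {k m : ℕ}

/-- The affine relation among the vertices of `O(Q_w)` carried by the `m`-th square of `P(w)`, whose
top is `snakeSide w m`, whose sides are `2m + 1` and `2m + 2`, and whose bottom is `2m + 3`. -/
noncomputable def squareRelation (n : ℕ) (w : ℕ → Letter) (m : ℕ) : SnakeHat n w →₀ ℝ :=
  .single (node n w (snakeSide w m)) 1 - .single (node n w (2 * m + 1)) 1 -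
    .single (node n w (2 * m + 2)) 1 + .single (node n w (2 * m + 3)) 1

/-- The combination `∑ c m • squareRelation n w m`. The labels occurring in it do not wrap around
as long as `c` is supported on `{0, …, n}`. -/
noncomputable def squareCombination (n : ℕ) (w : ℕ → Letter) : (ℕ →₀ ℝ) →ₗ[ℝ] SnakeHat n w →₀ ℝ :=
  Finsupp.linearCombination ℝ (squareRelation n w)

theorem squareRelation_mem_affineRelations (hm : m ≤ n) :
    squareRelation n w m ∈ affineRelations ℝ principalVertex := by
  rw [affineRelations, LinearMap.mem_ker, squareRelation]
  simp only [map_add, map_sub, Finsupp.linearCombination_single, one_smul, Prod.ext_iff,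
    Prod.fst_add, Prod.fst_sub, Prod.snd_add, Prod.snd_sub, Prod.fst_zero, Prod.snd_zero]
  refine ⟨funext fun q => ?_, by norm_num⟩
  simp only [Pi.add_apply, Pi.sub_apply, Pi.zero_apply, principalVertex_apply]
  rw [node_snakeSide_le_iff hm, node_odd_le_iff hm q.2]
  by_cases hodd : node n w (2 * m + 1) ≤ q.1 <;>
    by_cases heven : node n w (2 * m + 2) ≤ q.1 <;> simp [hodd, heven]

theorem squareCombination_mem_affineRelations (hc : ∀ m, n < m → c m = 0) :
    squareCombination n w c ∈ affineRelations ℝ principalVertex :=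
  Submodule.sum_mem _ fun m hm => Submodule.smul_mem _ _ <| squareRelation_mem_affineRelations <|
    not_lt.1 fun h => Finsupp.mem_support_iff.1 hm (hc m h)

theorem squareCombination_apply_node (hc : ∀ m, n < m → c m = 0) {x : ℕ} (hx : x < 2 * n + 6) :
    squareCombination n w c (node n w x) = c.sum fun m a =>
      a * ((if snakeSide w m = x then 1 else 0) - (if 2 * m + 1 = x then 1 else 0) -
        (if 2 * m + 2 = x then 1 else 0) + (if 2 * m + 3 = x then 1 else 0)) := by
  classical
  rw [squareCombination, Finsupp.linearCombination_apply, Finsupp.sum_apply]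
  refine Finsupp.sum_congr fun m hm => ?_
  have hmn : m ≤ n := not_lt.1 fun h => Finsupp.mem_support_iff.1 hm (hc m h)
  have hside := snakeSide_le w m
  simp only [squareRelation, Finsupp.smul_apply, smul_eq_mul, Finsupp.add_apply, Finsupp.sub_apply,
    Finsupp.single_apply, node_inj (show 2 * m + 1 < 2 * n + 6 by omega) hx,
    node_inj (show 2 * m + 2 < 2 * n + 6 by omega) hx,
    node_inj (show 2 * m + 3 < 2 * n + 6 by omega) hx,
    node_inj (show snakeSide w m < 2 * n + 6 by omega) hx]

theorem sum_mul_ite_eq_and {ι R : Type*} [DecidableEq ι] [Semiring R] (c : ι →₀ R) (j : ι)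
    (p : Prop) [Decidable p] :
    (c.sum fun m a => a * if m = j ∧ p then 1 else 0) = if p then c j else 0 := by
  by_cases hp : p <;> simp [hp, eq_comm]

theorem sum_mul_ite_eq {ι R : Type*} [DecidableEq ι] [Semiring R] (c : ι →₀ R) (j : ι) :
    (c.sum fun m a => a * if m = j then 1 else 0) = c j := by
  simp [eq_comm]

theorem squareCombination_apply_zero (hc : ∀ m, n < m → c m = 0) :
    squareCombination n w c (node n w 0) = c 0 := by
  rw [squareCombination_apply_node hc (by omega)]
  simp only [snakeSide_eq_zero_iff, Nat.succ_ne_zero, if_false, sub_zero, add_zero, sum_mul_ite_eq]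

theorem squareCombination_apply_one (hc : ∀ m, n < m → c m = 0) :
    squareCombination n w c (node n w 1) = (if w 1 = Letter.L then c 1 else 0) - c 0 := by
  rw [squareCombination_apply_node hc (by omega)]
  simp only [snakeSide_eq_one_iff, show ∀ m, 2 * m + 1 = 1 ↔ m = 0 by omega,
    show ∀ m, 2 * m + 2 ≠ 1 by omega, show ∀ m, 2 * m + 3 ≠ 1 by omega, if_false, sub_zero,
    add_zero, mul_sub, Finsupp.sum_sub, sum_mul_ite_eq_and, sum_mul_ite_eq]

theorem squareCombination_apply_two (hc : ∀ m, n < m → c m = 0) :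
    squareCombination n w c (node n w 2) = (if w 1 = Letter.L then 0 else c 1) - c 0 := by
  rw [squareCombination_apply_node hc (by omega)]
  simp only [snakeSide_eq_two_iff, show ∀ m, 2 * m + 1 ≠ 2 by omega,
    show ∀ m, 2 * m + 2 = 2 ↔ m = 0 by omega, show ∀ m, 2 * m + 3 ≠ 2 by omega, if_false, sub_zero,
    add_zero, mul_sub, Finsupp.sum_sub, sum_mul_ite_eq_and, sum_mul_ite_eq, ite_not]

open Classical in
theorem squareCombination_apply_odd (hc : ∀ m, n < m → c m = 0) (hk : k ≤ n + 1) :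
    squareCombination n w c (node n w (2 * k + 3)) =
      c k - c (k + 1) + (if IsTurn n w k then c (k + 2) else 0) := by
  have hturn : (if IsTurn n w k then c (k + 2) else 0) =
      if w (k + 1) ≠ w (k + 2) then c (k + 2) else 0 := by
    have := hc (k + 2)
    grind [IsTurn]
  rw [squareCombination_apply_node hc (by omega), hturn]
  simp only [snakeSide_eq_odd_iff, show ∀ m, 2 * m + 1 = 2 * k + 3 ↔ m = k + 1 by omega,
    show ∀ m, 2 * m + 2 ≠ 2 * k + 3 by omega, show ∀ m, 2 * m + 3 = 2 * k + 3 ↔ m = k by omega,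
    if_false, sub_zero, mul_sub, mul_add, Finsupp.sum_sub, Finsupp.sum_add, sum_mul_ite_eq_and,
    sum_mul_ite_eq]
  ring

open Classical in
theorem squareCombination_apply_even (hc : ∀ m, n < m → c m = 0) (hk : k ≤ n) :
    squareCombination n w c (node n w (2 * k + 4)) =
      (if IsTurn n w k then 0 else c (k + 2)) - c (k + 1) := by
  have hturn : (if IsTurn n w k then 0 else c (k + 2)) =
      if w (k + 1) = w (k + 2) then c (k + 2) else 0 := by
    have := hc (k + 2)
    grind [IsTurn]
  rw [squareCombination_apply_node hc (by omega), hturn]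
  simp only [snakeSide_eq_even_iff, show ∀ m, 2 * m + 1 ≠ 2 * k + 4 by omega,
    show ∀ m, 2 * m + 2 = 2 * k + 4 ↔ m = k + 1 by omega, show ∀ m, 2 * m + 3 ≠ 2 * k + 4 by omega,
    if_false, sub_zero, add_zero, mul_sub, Finsupp.sum_sub, sum_mul_ite_eq_and, sum_mul_ite_eq]

theorem support_squareCombination_subset (hc : ∀ m, n < m → c m = 0) (hd : ∀ m, n < m → d m = 0)
    (h : ZerosSubset (IsTurn n w) c d) :
    (squareCombination n w d).support ⊆ (squareCombination n w c).support := by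
  intro x hx
  contrapose! hx
  rw [Finsupp.notMem_support_iff] at hx ⊢
  have h0 := h.zero
  have h1 := h.succ 0
  rcases exists_eq_node_cases x with rfl | rfl | rfl | ⟨k, hk, rfl⟩ | ⟨k, hk, rfl⟩
  · simp only [squareCombination_apply_zero hc, squareCombination_apply_zero hd] at hx ⊢
    exact h0 hx
  · simp only [squareCombination_apply_one hc, squareCombination_apply_one hd] at hx ⊢
    grind
  · simp only [squareCombination_apply_two hc, squareCombination_apply_two hd] at hx ⊢
    grind
  · simp only [squareCombination_apply_odd hc hk, squareCombination_apply_odd hd hk] at hx ⊢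
    have hsucc := h.succ k
    have hturn := h.turn k
    grind
  · simp only [squareCombination_apply_even hc hk, squareCombination_apply_even hd hk] at hx ⊢
    have hsucc := h.succ (k + 1)
    have hmid := h.turn_mid k
    grind

theorem InV.exists_squareCombination_apply_eq_zero_iff (hw : InV n w) (hk : k ≤ n) :
    ∃ x, ∀ c : ℕ →₀ ℝ, (∀ m, n < m → c m = 0) →
      (squareCombination n w c x = 0 ↔ c k = c (k + 1)) := by
  by_cases hT : IsTurn n w k
  · cases k with
    | zero =>
      by_cases hL : w 1 = Letter.L
      · refine ⟨node n w 1, fun c hc => ?_⟩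
        rw [squareCombination_apply_one hc, if_pos hL, sub_eq_zero, eq_comm]
      · refine ⟨node n w 2, fun c hc => ?_⟩
        rw [squareCombination_apply_two hc, if_neg hL, sub_eq_zero, eq_comm]
    | succ k =>
      refine ⟨node n w (2 * k + 4), fun c hc => ?_⟩
      rw [squareCombination_apply_even hc (by omega),
        if_neg fun hT' => hw.not_isTurn_succ k hT' hT, sub_eq_zero, eq_comm]
  · refine ⟨node n w (2 * k + 3), fun c hc => ?_⟩
    rw [squareCombination_apply_odd hc (by omega), if_neg hT, add_zero, sub_eq_zero]

theorem InV.zerosSubset_of_support_subset (hw : InV n w) (hc : ∀ m, n < m → c m = 0)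
    (hd : ∀ m, n < m → d m = 0)
    (h : (squareCombination n w d).support ⊆ (squareCombination n w c).support) :
    ZerosSubset (IsTurn n w) c d := by
  have hzero : ∀ x, squareCombination n w c x = 0 → squareCombination n w d x = 0 :=
    fun x hx => Finsupp.notMem_support_iff.1 fun hmem => Finsupp.mem_support_iff.1 (h hmem) hx
  refine ⟨fun h0 => ?_, fun k hk => ?_, fun k hT h0 => ?_, fun k hT h0 => ?_⟩
  · rw [← squareCombination_apply_zero (w := w) hc] at h0
    rw [← squareCombination_apply_zero (w := w) hd, hzero _ h0]
  · rcases lt_or_ge n k with hkn | hkn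
    · rw [hd k hkn, hd (k + 1) (by omega)]
    · obtain ⟨x, hx⟩ := hw.exists_squareCombination_apply_eq_zero_iff hkn
      exact (hx d hd).1 (hzero x ((hx c hc).2 hk))
  · have hk : k ≤ n := by have := hT.1; omega
    have := hzero (node n w (2 * k + 4))
    rw [squareCombination_apply_even hc hk, squareCombination_apply_even hd hk] at this
    simpa [hT, h0] using this
  · have hk : k ≤ n + 1 := by have := hT.1; omega
    have := hzero (node n w (2 * k + 3))
    rw [squareCombination_apply_odd hc hk, squareCombination_apply_odd hd hk] at this
    simpa only [hT, if_true, h0, true_imp_iff] using this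

open Classical in
theorem exists_sub_add_eq (T : ℕ → Prop) (n : ℕ) (g : ℕ → ℝ) :
    ∃ c : ℕ →₀ ℝ, (∀ m, n < m → c m = 0) ∧
      ∀ k ≤ n, c k - c (k + 1) + (if T k then c (k + 2) else 0) = g k := by
  suffices key : ∀ i ≤ n + 1, ∃ c : ℕ →₀ ℝ, (∀ m, n < m → c m = 0) ∧
      ∀ k ≤ n, i ≤ k → c k - c (k + 1) + (if T k then c (k + 2) else 0) = g k by
    obtain ⟨c, hc, hg⟩ := key 0 (Nat.zero_le _)
    exact ⟨c, hc, fun k hk => hg k hk k.zero_le⟩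
  intro i hi
  induction hi using Nat.decreasingInduction with
  | self => exact ⟨0, by simp, fun k _ _ => by omega⟩
  | of_succ i hi ih =>
    obtain ⟨c, hc, hg⟩ := ih
    refine ⟨c.update i (g i + c (i + 1) - if T i then c (i + 2) else 0), fun m hm => ?_,
      fun k hk hik => ?_⟩
    · simp [Finsupp.update_apply, hc m hm, show m ≠ i by omega]
    · rcases hik.eq_or_lt with rfl | hlt
      · grind
      · simpa [Finsupp.update_apply, show k ≠ i by omega, show k + 1 ≠ i by omega,
          show k + 2 ≠ i by omega] using hg k hk hlt

theorem exists_squareCombination_eq {f : SnakeHat n w →₀ ℝ}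
    (hf : f ∈ affineRelations ℝ principalVertex) :
    ∃ c, (∀ m, n < m → c m = 0) ∧ squareCombination n w c = f := by
  obtain ⟨c, hc, hcf⟩ := exists_sub_add_eq (IsTurn n w) n fun k => f (node n w (2 * k + 3))
  refine ⟨c, hc, sub_eq_zero.1 ?_⟩
  refine eq_zero_of_mem_affineRelations_principalVertex
    (Submodule.sub_mem _ (squareCombination_mem_affineRelations hc) hf) fun x hx htop => ?_
  have htop' : x.1 ≠ 2 * n + 4 := fun h => htop (by rw [← node_val x, h]; exact isTop_node)
  obtain ⟨m, hm, hxm⟩ : ∃ m ≤ n, x.1 = 2 * m + 3 := by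
    by_contra! h
    exact hx (meetIrred_iff.2 ⟨htop', h⟩)
  rw [← node_val x, hxm, Finsupp.sub_apply, squareCombination_apply_odd hc (by omega), hcf m hm,
    sub_self]

end SquareRelations

section SnakeCircuits

variable {n : ℕ} {w : ℕ → Letter}

/-- The circuit vector of `S ∈ 𝒢(w)`: the signed sum of the square relations indexed by `S`. -/
noncomputable def circuitVector (S : GSets n w) : SnakeHat n w →₀ ℝ :=
  squareCombination n w (signVector (finite_of_mem_GSets S.2).toFinset)

theorem isLinked_toFinset (S : GSets n w) :
    IsLinked (IsTurn n w) (finite_of_mem_GSets S.2).toFinset :=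
  (coe_mem_GSets_iff.1 (by simp)).1

theorem signVector_toFinset_eq_zero (S : GSets n w) (m : ℕ) (hm : n < m) :
    signVector (finite_of_mem_GSets S.2).toFinset m = 0 :=
  signVector_eq_zero_iff.2 fun hmem => (S.2.2.1 m (by simpa using hmem)).not_gt hm

theorem InV.exists_eq_smul_signVector (hw : InV n w) (S : GSets n w) {c : ℕ →₀ ℝ}
    (hc : ∀ m, n < m → c m = 0)
    (h : (squareCombination n w c).support ⊆ (circuitVector S).support) :
    ∃ t : ℝ, c = t • signVector (finite_of_mem_GSets S.2).toFinset :=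
  (isLinked_toFinset S).exists_eq_smul_signVector <|
    hw.zerosSubset_of_support_subset (signVector_toFinset_eq_zero S) hc h

theorem InV.circuitVector_ne_zero (hw : InV n w) (S : GSets n w) : circuitVector S ≠ 0 := by
  intro h0
  have hsign : signVector (finite_of_mem_GSets S.2).toFinset = 0 :=
    (hw.zerosSubset_of_support_subset (by simp) (signVector_toFinset_eq_zero S)
      (by rw [← circuitVector, h0]; simp)).eq_zero
  have hempty := support_signVector (finite_of_mem_GSets S.2).toFinset
  rw [hsign, Finsupp.support_zero] at hempty
  exact (isLinked_toFinset S).nonempty.ne_empty hempty.symm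

theorem InV.subset_of_support_circuitVector_subset (hw : InV n w) {S S' : GSets n w}
    (h : (circuitVector S).support ⊆ (circuitVector S').support) : S.1 ⊆ S'.1 := by
  obtain ⟨t, ht⟩ := hw.exists_eq_smul_signVector S' (signVector_toFinset_eq_zero S) h
  have hsupp := Finsupp.support_smul (b := t) (g := signVector (finite_of_mem_GSets S'.2).toFinset)
  rw [← ht, support_signVector, support_signVector] at hsupp
  simpa using hsupp

theorem InV.exists_support_circuitVector_subset (hw : InV n w) {f : SnakeHat n w →₀ ℝ}
    (hf : f ∈ affineRelations ℝ principalVertex) (hf0 : f ≠ 0) :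
    ∃ S : GSets n w, (circuitVector S).support ⊆ f.support := by
  obtain ⟨c, hc, rfl⟩ := exists_squareCombination_eq hf
  have hc0 : c ≠ 0 := by
    rintro rfl
    exact hf0 (map_zero _)
  obtain ⟨S, hlinked, hSc, hzeros⟩ := exists_isLinked_zerosSubset hw.not_isTurn_succ hc0
  have hS : ∀ i ∈ S, i ≤ n := fun i hi =>
    not_lt.1 fun hni => Finsupp.mem_support_iff.1 (hSc hi) (hc i hni)
  refine ⟨⟨S, coe_mem_GSets_iff.2 ⟨hlinked, hS⟩⟩, support_squareCombination_subset hc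
    (signVector_toFinset_eq_zero _) ?_⟩
  rwa [Finset.finite_toSet_toFinset]

theorem InV.isElementarySystem_circuitVector (hw : InV n w) :
    IsElementarySystem (affineRelations ℝ principalVertex) (circuitVector (n := n) (w := w)) where
  mem S := squareCombination_mem_affineRelations (signVector_toFinset_eq_zero S)
  ne_zero := hw.circuitVector_ne_zero
  exists_eq_smul S f hf hfS := by
    obtain ⟨c, hc, rfl⟩ := exists_squareCombination_eq hf
    obtain ⟨t, rfl⟩ := hw.exists_eq_smul_signVector S hc hfS
    exact ⟨t, map_smul _ _ _⟩
  exists_support_subset _ := hw.exists_support_circuitVector_subset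
  support_injective _ _ h := Subtype.ext <|
    (hw.subset_of_support_circuitVector_subset h.subset).antisymm
      (hw.subset_of_support_circuitVector_subset h.superset)

end SnakeCircuits

theorem stmt11 (n : ℕ) (w : ℕ → Letter) (hw : InV n w) :
    (∃ Γ : GSets n w →
        {Z : Set (SnakeQ n w → ℝ) // Z ⊆ OPVertexSet (SnakeQ n w) ∧ IsAffCircuit Z},
      Function.Bijective Γ) ∧
    Nat.card {Z : Set (SnakeQ n w → ℝ) //
        Z ⊆ OPVertexSet (SnakeQ n w) ∧ IsAffCircuit Z} = (GSets n w).ncard := by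
  have hbij := hw.isElementarySystem_circuitVector.exists_bijective principalVertex_injective
  rw [range_principalVertex SnakeHat.isTop_node SnakeHat.exists_le_iff_or] at hbij
  obtain ⟨Γ, hΓ⟩ := hbij
  exact ⟨⟨Γ, hΓ⟩, (Nat.card_eq_of_bijective Γ hΓ).symm⟩
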